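/- (Stability of lengths and gradients for self-concordant edge costs.) Let E be a finite index set and α ∈ (0, 1/2]. For each e ∈ E, let ζ_e : I_e → ℝ be three times continuously differentiable on an open interval I_e with ζ_e″ > 0 on I_e, and suppose 4·α^{−1}·ζ_e is self-concordant on I_e. Define, for f with f_e ∈ I_e for all e, the lengths ℓ(f)_e := (α^{−1}·ζ_e″(f_e))^{1/2} and gradients g(f)_e := ζ_e′(f_e), and L(f) := diag(ℓ(f)). Let f, f̄ with f_e, f̄_e ∈ I_e for all e satisfy ‖L(f)(f − f̄)‖_∞ ≤ ε for some ε ∈ (0, 1/1000). Then for every e ∈ E: ℓ(f)_e ≈_{1+5ε} ℓ(f̄)_e, and |g(f)_e − g(f̄)_e| ≤ ε·ℓ(f)_e (i.e. ‖L(f)^{−1}(g(f) − g(f̄))‖_∞ ≤ ε). -/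

import Mathlib

noncomputable section

lemma aux19 (α : ℝ) (hα : 0 < α ∧ α ≤ 1 / 2)
    (I : Set ℝ) (hIopen : IsOpen I) (hIconv : Convex ℝ I)
    (z : ℝ → ℝ) (hz : ContDiffOn ℝ 3 z I)
    (hz2 : ∀ x ∈ I, 0 < deriv (deriv z) x)
    (hself : ∀ x ∈ I,
      |deriv (deriv (deriv fun s => 4 * α⁻¹ * z s)) x|
        ≤ 2 * (deriv (deriv fun s => 4 * α⁻¹ * z s) x) ^ ((3 : ℝ) / 2))
    (ε : ℝ) (hε : 0 < ε ∧ ε < 1 / 1000)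
    (a b : ℝ) (ha : a ∈ I) (hb : b ∈ I)
    (hclose : |Real.sqrt (α⁻¹ * deriv (deriv z) a) * (a - b)| ≤ ε) :
      ((1 + 5 * ε)⁻¹ * Real.sqrt (α⁻¹ * deriv (deriv z) b)
          ≤ Real.sqrt (α⁻¹ * deriv (deriv z) a) ∧
        Real.sqrt (α⁻¹ * deriv (deriv z) a)
          ≤ (1 + 5 * ε) * Real.sqrt (α⁻¹ * deriv (deriv z) b)) ∧
        |deriv z a - deriv z b|
          ≤ ε * Real.sqrt (α⁻¹ * deriv (deriv z) a) := by
  obtain ⟨hα0, hα1⟩ := hα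
  obtain ⟨hε0, hε1⟩ := hε
  have c1 : ContDiffOn ℝ 2 (deriv z) I := hz.deriv_of_isOpen hIopen (by norm_num)
  have c2 : ContDiffOn ℝ 1 (deriv (deriv z)) I := c1.deriv_of_isOpen hIopen (by norm_num)
  have d1 : ∀ x ∈ I, HasDerivAt (deriv z) (deriv (deriv z) x) x := fun x hx =>
    ((c1.differentiableOn (by norm_num)).differentiableAt (hIopen.mem_nhds hx)).hasDerivAt
  have d2 : ∀ x ∈ I, HasDerivAt (deriv (deriv z)) (deriv (deriv (deriv z)) x) x := fun x hx =>
    ((c2.differentiableOn (by norm_num)).differentiableAt (hIopen.mem_nhds hx)).hasDerivAt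
  have e1 : ∀ (c : ℝ) (g : ℝ → ℝ), (deriv fun s => c * g s) = fun s => c * deriv g s := by
    intro c g
    funext s
    exact deriv_const_mul_field c
  simp only [e1] at hself
  set ℓ : ℝ → ℝ := fun x => Real.sqrt (α⁻¹ * deriv (deriv z) x) with hℓ
  have hw : ∀ x ∈ I, 0 < α⁻¹ * deriv (deriv z) x := fun x hx => mul_pos (inv_pos.2 hα0) (hz2 x hx)
  have hlpos : ∀ x ∈ I, 0 < ℓ x := fun x hx => Real.sqrt_pos.2 (hw x hx)
  have hlsq : ∀ x ∈ I, ℓ x ^ 2 = α⁻¹ * deriv (deriv z) x := fun x hx => Real.sq_sqrt (hw x hx).le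
  have hD3 : ∀ x ∈ I, |α⁻¹ * deriv (deriv (deriv z)) x| ≤ 4 * ℓ x ^ 3 := by
    intro x hx
    have h := hself x hx
    have hl := hlpos x hx
    have hp : (4 * α⁻¹ * deriv (deriv z) x) ^ ((3 : ℝ) / 2) = 8 * ℓ x ^ 3 := by
      have : 4 * α⁻¹ * deriv (deriv z) x = (2 * ℓ x) ^ (2 : ℝ) := by
        rw [Real.rpow_two, mul_pow, hlsq x hx]; ring
      rw [this, ← Real.rpow_mul (by positivity)]
      have : (2 : ℝ) * (3 / 2) = (3 : ℕ) := by norm_num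
      rw [this, Real.rpow_natCast]; ring
    rw [hp, mul_assoc, abs_mul] at h
    norm_num at h ⊢
    linarith
  have dφ : ∀ x ∈ I, HasDerivAt (fun x => (ℓ x)⁻¹)
      (-(α⁻¹ * deriv (deriv (deriv z)) x / (2 * ℓ x)) / ℓ x ^ 2) x := fun x hx =>
    (((d2 x hx).const_mul α⁻¹).sqrt (hw x hx).ne').inv (hlpos x hx).ne'
  have hLip : ∀ x ∈ I, |(ℓ x)⁻¹ - (ℓ a)⁻¹| ≤ 2 * |x - a| := by
    intro x hx
    refine hIconv.norm_image_sub_le_of_norm_hasDerivWithin_le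
      (fun y hy => (dφ y hy).hasDerivWithinAt) (fun y hy => ?_) ha hx
    have hl := hlpos y hy
    rw [Real.norm_eq_abs, abs_div, abs_neg, abs_div, abs_of_pos (by positivity : 0 < 2 * ℓ y),
      abs_of_pos (by positivity : 0 < ℓ y ^ 2), div_div, div_le_iff₀ (by positivity)]
    have := hD3 y hy
    linarith
  have hla := hlpos a ha
  have hab : ℓ a * |b - a| ≤ ε := by
    rw [abs_sub_comm]
    rwa [abs_mul, abs_of_pos hla] at hclose
  have key : ∀ x ∈ I, |x - a| ≤ |b - a| → (1 - 2 * ε) * ℓ x ≤ ℓ a ∧ ℓ a ≤ (1 + 2 * ε) * ℓ x := by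
    intro x hx hxa
    have hl := hlpos x hx
    have h1 : ℓ a * |x - a| ≤ ε := le_trans (by gcongr) hab
    have h2 := hLip x hx
    have h3 : |ℓ a / ℓ x - 1| ≤ 2 * ε := by
      have : ℓ a / ℓ x - 1 = ℓ a * ((ℓ x)⁻¹ - (ℓ a)⁻¹) := by field_simp
      rw [this, abs_mul, abs_of_pos hla]
      nlinarith
    rw [abs_le] at h3
    constructor
    · rw [← le_div_iff₀ hl]; linarith [h3.1]
    · rw [← div_le_iff₀ hl]; linarith [h3.2]
  obtain ⟨k1, k2⟩ := key b hb le_rfl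
  have hlb := hlpos b hb
  refine ⟨⟨?_, ?_⟩, ?_⟩
  · change (1 + 5 * ε)⁻¹ * ℓ b ≤ ℓ a
    rw [inv_mul_le_iff₀ (by positivity)]
    have : 1 ≤ (1 + 5 * ε) * (1 - 2 * ε) := by nlinarith
    calc ℓ b ≤ ((1 + 5 * ε) * (1 - 2 * ε)) * ℓ b := le_mul_of_one_le_left hlb.le this
      _ = (1 + 5 * ε) * ((1 - 2 * ε) * ℓ b) := by ring
      _ ≤ _ := by gcongr
  · change ℓ a ≤ (1 + 5 * ε) * ℓ b
    nlinarith
  · change |deriv z a - deriv z b| ≤ ε * ℓ a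
    have hseg : segment ℝ a b ⊆ I := hIconv.segment_subset ha hb
    have hb2 : ∀ x ∈ segment ℝ a b, ‖deriv (deriv z) x‖ ≤ ℓ a ^ 2 := by
      intro x hx
      have hxI := hseg hx
      have hxa : |x - a| ≤ |b - a| := by
        rw [segment_eq_uIcc] at hx
        exact Set.abs_sub_left_of_mem_uIcc hx
      obtain ⟨q, -⟩ := key x hxI hxa
      have hl := hlpos x hxI
      have hs := hlsq x hxI
      have hd : deriv (deriv z) x = α * ℓ x ^ 2 := by rw [hs]; field_simp
      rw [Real.norm_eq_abs, abs_of_pos (hz2 x hxI), hd]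
      have q2 : ((1 - 2 * ε) * ℓ x) ^ 2 ≤ ℓ a ^ 2 := by
        have : 0 < 1 - 2 * ε := by linarith
        gcongr
      have q3 : α ≤ (1 - 2 * ε) ^ 2 := by nlinarith
      calc α * ℓ x ^ 2 ≤ (1 - 2 * ε) ^ 2 * ℓ x ^ 2 := by gcongr
        _ = ((1 - 2 * ε) * ℓ x) ^ 2 := by ring
        _ ≤ _ := q2
    have := (convex_segment a b).norm_image_sub_le_of_norm_hasDerivWithin_le
      (fun y hy => (d1 y (hseg hy)).hasDerivWithinAt) hb2
      (left_mem_segment ℝ a b) (right_mem_segment ℝ a b)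
    rw [Real.norm_eq_abs, Real.norm_eq_abs] at this
    rw [abs_sub_comm]
    nlinarith

/-- stability of lengths and gradients for self-concordant edge
costs: for edge costs `ζ_e` that are `C³` with `ζ_e'' > 0` on an open interval `I_e`
(an open convex subset of `ℝ`) and such that `4 α⁻¹ ζ_e` is self-concordant on `I_e`
(i.e. `|h'''| ≤ 2 h''^{3/2}` for `h = 4 α⁻¹ ζ_e`), the lengths
`ℓ(f)_e = (α⁻¹ ζ_e''(f_e))^{1/2}` and gradients `g(f)_e = ζ_e'(f_e)` are stable: if
`‖L(f)(f - f̄)‖_∞ ≤ ε < 1/1000`, then `ℓ(f)_e ≈_{1+5ε} ℓ(f̄)_e` and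
`|g(f)_e - g(f̄)_e| ≤ ε ℓ(f)_e` for every `e`. -/
theorem stmt19
    {E : Type} [Fintype E]
    (α : ℝ) (hα : 0 < α ∧ α ≤ 1 / 2)
    (I : E → Set ℝ) (hIopen : ∀ e, IsOpen (I e)) (hIconv : ∀ e, Convex ℝ (I e))
    (ζ : E → ℝ → ℝ)
    (hζ : ∀ e, ContDiffOn ℝ 3 (ζ e) (I e))
    (hζ'' : ∀ e, ∀ x ∈ I e, 0 < deriv (deriv (ζ e)) x)
    (hselfcon : ∀ e, ∀ x ∈ I e,
      |deriv (deriv (deriv fun s => 4 * α⁻¹ * ζ e s)) x|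
        ≤ 2 * (deriv (deriv fun s => 4 * α⁻¹ * ζ e s) x) ^ ((3 : ℝ) / 2))
    (ε : ℝ) (hε : 0 < ε ∧ ε < 1 / 1000)
    (f fb : E → ℝ) (hf : ∀ e, f e ∈ I e) (hfb : ∀ e, fb e ∈ I e)
    (hclose : ∀ e,
      |Real.sqrt (α⁻¹ * deriv (deriv (ζ e)) (f e)) * (f e - fb e)| ≤ ε) :
    ∀ e,
      ((1 + 5 * ε)⁻¹ * Real.sqrt (α⁻¹ * deriv (deriv (ζ e)) (fb e))
          ≤ Real.sqrt (α⁻¹ * deriv (deriv (ζ e)) (f e)) ∧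
        Real.sqrt (α⁻¹ * deriv (deriv (ζ e)) (f e))
          ≤ (1 + 5 * ε) * Real.sqrt (α⁻¹ * deriv (deriv (ζ e)) (fb e))) ∧
        |deriv (ζ e) (f e) - deriv (ζ e) (fb e)|
          ≤ ε * Real.sqrt (α⁻¹ * deriv (deriv (ζ e)) (f e)) := by
  intro e
  exact aux19 α hα (I e) (hIopen e) (hIconv e) (ζ e) (hζ e) (hζ'' e) (hselfcon e) ε hε
    (f e) (fb e) (hf e) (hfb e) (hclose e)
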